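/- arXiv:1110.3561 — 2 statements merged into one kernel-verified Lean document; each statement's English description precedes it below -/
import Mathlib

section
/- Let m be a positive integer, let τ > 0 and s ≥ 0, let A be a d × n real matrix with operator norm at most s, and let x, x̂ ∈ [0,1]ⁿ satisfy Ax = Ax̂ and ‖A([x]_m − [x̂]_m)‖₂ ≥ τ ‖[x]_m − [x̂]_m‖₂, where [·]_m is the coordinatewise m-bit truncation. Then ‖x − x̂‖₂ ≤ (s/τ + 1) · √(n · 2^{1−2m}). -/
/-- The Euclidean (`ℓ₂`) norm of a vector in `ℝᵏ`. -/
noncomputable def l2norm {k : ℕ} (v : Fin k → ℝ) : ℝ := Real.sqrt (∑ i, v i ^ 2)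

/-- The `m`-bit truncation of a real number: `[x]_m = 2⁻ᵐ ⌊2ᵐ x⌋`. -/
noncomputable def trunc (m : ℕ) (x : ℝ) : ℝ := (⌊(2 : ℝ) ^ m * x⌋ : ℝ) / 2 ^ m

theorem l2norm_eq_norm {k : ℕ} (v : Fin k → ℝ) :
    l2norm v = ‖(WithLp.toLp 2 v : EuclideanSpace ℝ (Fin k))‖ := by
  simp [l2norm, EuclideanSpace.norm_eq]

theorem l2norm_add_le {k : ℕ} (v w : Fin k → ℝ) :
    l2norm (v + w) ≤ l2norm v + l2norm w := by
  simp only [l2norm_eq_norm, WithLp.toLp_add]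
  exact norm_add_le _ _

theorem l2norm_neg {k : ℕ} (v : Fin k → ℝ) : l2norm (-v) = l2norm v := by
  simp [l2norm]

theorem trunc_bounds (m : ℕ) (x : ℝ) :
    0 ≤ x - trunc m x ∧ x - trunc m x < ((2 : ℝ) ^ m)⁻¹ := by
  have h2 : (0 : ℝ) < 2 ^ m := by positivity
  have h : x - trunc m x = ((2 : ℝ) ^ m)⁻¹ * (2 ^ m * x - ⌊(2 : ℝ) ^ m * x⌋) := by
    unfold trunc
    field_simp
  have h3 := Int.floor_le ((2 : ℝ) ^ m * x)
  have h4 := Int.lt_floor_add_one ((2 : ℝ) ^ m * x)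
  rw [h]
  refine ⟨mul_nonneg (by positivity) (by linarith), ?_⟩
  exact mul_lt_of_lt_one_right (by positivity) (by linarith)

/-- Let `m` be a positive integer, `τ > 0`, `s ≥ 0`, and let `A` be a `d × n`
real matrix with operator norm at most `s` (i.e. `‖Av‖₂ ≤ s ‖v‖₂` for all `v`). If
`x, x̂ ∈ [0,1]ⁿ` satisfy `Ax = Ax̂` and `‖A([x]_m - [x̂]_m)‖₂ ≥ τ ‖[x]_m - [x̂]_m‖₂`, then
`‖x - x̂‖₂ ≤ (s/τ + 1) √(n 2^(1-2m))`. -/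
theorem recovery_error_bound
    (m : ℕ) (hm : 0 < m) (τ : ℝ) (hτ : 0 < τ) (s : ℝ) (hs : 0 ≤ s)
    (d n : ℕ) (A : Matrix (Fin d) (Fin n) ℝ)
    (hA : ∀ v : Fin n → ℝ, l2norm (A.mulVec v) ≤ s * l2norm v)
    (x xh : Fin n → ℝ)
    (hx : ∀ j, x j ∈ Set.Icc (0 : ℝ) 1) (hxh : ∀ j, xh j ∈ Set.Icc (0 : ℝ) 1)
    (heq : A.mulVec x = A.mulVec xh)
    (hlow : τ * l2norm (fun j => trunc m (x j) - trunc m (xh j))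
      ≤ l2norm (A.mulVec (fun j => trunc m (x j) - trunc m (xh j)))) :
    l2norm (fun j => x j - xh j)
      ≤ (s / τ + 1) * Real.sqrt (n * (2 : ℝ) ^ (1 - 2 * (m : ℤ))) := by
  set D : Fin n → ℝ := fun j => trunc m (x j) - trunc m (xh j) with hD
  set e : Fin n → ℝ := fun j => (x j - trunc m (x j)) - (xh j - trunc m (xh j)) with he
  have hsum : (fun j => x j - xh j) = D + e := by
    funext j
    simp only [hD, he, Pi.add_apply]
    ring
  have hAD : A.mulVec D = -A.mulVec e := by
    have h1 : D = (x - xh) + -e := by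
      funext j
      simp only [hD, he, Pi.add_apply, Pi.sub_apply, Pi.neg_apply]
      ring
    rw [h1, Matrix.mulVec_add, Matrix.mulVec_sub, heq, Matrix.mulVec_neg]
    simp
  have hDe : l2norm D ≤ s / τ * l2norm e := by
    rw [hAD, l2norm_neg] at hlow
    have := hlow.trans (hA e)
    rw [div_mul_eq_mul_div, le_div_iff₀ hτ]
    linarith
  have hz : (2 : ℝ) ^ (1 - 2 * (m : ℤ)) = 2 * (((2 : ℝ) ^ m)⁻¹) ^ 2 := by
    rw [zpow_sub₀ (by norm_num), mul_comm (2 : ℤ), zpow_mul]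
    simp [div_eq_mul_inv]
  have hel : l2norm e ≤ Real.sqrt (n * (2 : ℝ) ^ (1 - 2 * (m : ℤ))) := by
    unfold l2norm
    apply Real.sqrt_le_sqrt
    have hb : ∀ j ∈ Finset.univ, e j ^ 2 ≤ (2 : ℝ) ^ (1 - 2 * (m : ℤ)) := by
      intro j _
      obtain ⟨a1, a2⟩ := trunc_bounds m (x j)
      obtain ⟨b1, b2⟩ := trunc_bounds m (xh j)
      have h1 : e j ^ 2 ≤ (((2 : ℝ) ^ m)⁻¹) ^ 2 := by
        apply sq_le_sq'
        · simp only [he]; linarith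
        · simp only [he]; linarith
      rw [hz]
      linarith [sq_nonneg (((2 : ℝ) ^ m)⁻¹)]
    simpa using Finset.sum_le_card_nsmul _ _ _ hb
  rw [hsum]
  calc l2norm (D + e) ≤ l2norm D + l2norm e := l2norm_add_le _ _
    _ ≤ (s / τ + 1) * l2norm e := by linarith
    _ ≤ _ := mul_le_mul_of_nonneg_left hel (by positivity)
end

section
/- Let 0 < p < 1 and let x ∈ ℝⁿ satisfy ∑_{j=1}^n |x_j|^p ≤ 1. Then for every positive integer k there exists a vector x̃ ∈ ℝⁿ with at most k nonzero coordinates (obtained by keeping the k largest-magnitude coordinates of x and setting the rest to zero) such that ‖x − x̃‖₂ ≤ k^{1/2 − 1/p}. -/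
open Finset

/-- If `0 < p < 1` and `x ∈ ℝⁿ` lies in the unit `ℓ_p` ball, i.e.
`∑ j, |x j| ^ p ≤ 1`, then for every positive integer `k` there is a `k`-sparse vector `x̃`
with `‖x - x̃‖₂ ≤ k ^ (1/2 - 1/p)`. -/
theorem lp_ball_sparse_approximation
    (n : ℕ) (p : ℝ) (hp0 : 0 < p) (hp1 : p < 1) (x : Fin n → ℝ)
    (hx : ∑ j, |x j| ^ p ≤ 1) (k : ℕ) (hk : 0 < k) :
    ∃ xt : Fin n → ℝ,
      (univ.filter fun j => xt j ≠ 0).card ≤ k ∧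
      l2norm (fun j => x j - xt j) ≤ (k : ℝ) ^ ((1 : ℝ) / 2 - 1 / p) := by
  have hk' : (0 : ℝ) < k := by exact_mod_cast hk
  -- threshold `t = k ^ (-1/p)`: at most `k` coordinates exceed it
  obtain ⟨t, ht⟩ : ∃ t : ℝ, t = (k : ℝ) ^ (-(1 / p)) := ⟨_, rfl⟩
  have ht0 : 0 < t := ht ▸ Real.rpow_pos_of_pos hk' _
  have htp : t ^ p = (k : ℝ)⁻¹ := by
    rw [ht, ← Real.rpow_mul hk'.le, ← Real.rpow_neg_one]
    congr 1
    field_simp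
  have htq : t ^ (2 - p) = ((k : ℝ) ^ ((1 : ℝ) / 2 - 1 / p)) ^ 2 := by
    rw [ht, ← Real.rpow_mul hk'.le, ← Real.rpow_natCast, ← Real.rpow_mul hk'.le]
    congr 1
    push_cast
    field_simp
    ring
  refine ⟨fun j => if t < |x j| then x j else 0, ?_, ?_⟩
  · have hsub : (univ.filter fun j => (if t < |x j| then x j else 0) ≠ 0) ⊆
        univ.filter fun j => t < |x j| := by
      intro j hj
      simp only [mem_filter, mem_univ, true_and] at hj ⊢
      by_contra h
      simp [h] at hj
    refine (card_le_card hsub).trans ?_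
    have h1 : ((univ.filter fun j => t < |x j|).card : ℝ) * (k : ℝ)⁻¹ ≤ 1 := by
      rw [← nsmul_eq_mul]
      refine (card_nsmul_le_sum _ (fun j => |x j| ^ p) _ ?_).trans
        ((sum_le_sum_of_subset_of_nonneg (filter_subset _ _) ?_).trans hx)
      · intro j hj
        rw [← htp]
        exact Real.rpow_le_rpow ht0.le (mem_filter.1 hj).2.le hp0.le
      · intro j _ _
        positivity
    rw [← div_eq_mul_inv, div_le_one hk'] at h1
    exact_mod_cast h1
  · unfold l2norm
    apply Real.sqrt_le_iff.2 ⟨by positivity, ?_⟩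
    rw [← htq]
    calc ∑ j, (x j - if t < |x j| then x j else 0) ^ 2
        ≤ ∑ j, t ^ (2 - p) * |x j| ^ p := by
          refine sum_le_sum fun j _ => ?_
          split_ifs with h
          · rw [sub_self, zero_pow two_ne_zero]
            positivity
          · have h2 : (x j - 0) ^ 2 = |x j| ^ (2 - p) * |x j| ^ p := by
              rw [← Real.rpow_add' (abs_nonneg _) (by norm_num), sub_add_cancel, sub_zero,
                Real.rpow_two, sq_abs]
            rw [h2]
            exact mul_le_mul_of_nonneg_right
              (Real.rpow_le_rpow (abs_nonneg _) (not_lt.1 h) (by linarith)) (by positivity)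
      _ = t ^ (2 - p) * ∑ j, |x j| ^ p := by rw [mul_sum]
      _ ≤ t ^ (2 - p) := mul_le_of_le_one_right (by positivity) hx
end
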